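/- For any width h ≥ 2 and any convex loss function l : ℝ × ℝ → ℝ such that l(y, ŷ) is minimized exactly when ŷ = y, there exists a finite dataset {(x_i, y_i)}_{i=1}^n generated by a ground-truth two-layer ReLU teacher network with two hidden units and one output unit (i.e., y_i equals the teacher's output on x_i) such that the set of global minimizers of the empirical loss L(θ) = (1/n) Σ_i l(y_i, f_θ(x_i)) for the two-layer ReLU student network with h hidden units is not connected: there exist two global minimizers θ^A and θ^B such that every continuous path π : [0,1] → Θ with π(0) = θ^A and π(1) = θ^B contains a point t with L(f_{π(t)}) > L(f_{θ^A}). -/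

import Mathlib

open scoped BigOperators

noncomputable section

/-- A two-layer ReLU network with `H` hidden units on inputs in `ℝ^{inp}`:
`f_{(w,A)}(x) = wᵀ φ(A x)`. -/
def net2 {H inp : ℕ} (w : Fin H → ℝ) (A : Matrix (Fin H) (Fin inp) ℝ)
    (x : Fin inp → ℝ) : ℝ :=
  ∑ r, w r * max (A.mulVec x r) 0

/-- Empirical loss of a two-layer network on the dataset `(X, y)`. -/
def loss2 {H inp : ℕ} (n : ℕ) (l : ℝ → ℝ → ℝ)
    (X : Fin n → (Fin inp → ℝ)) (y : Fin n → ℝ)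
    (θ : (Fin H → ℝ) × Matrix (Fin H) (Fin inp) ℝ) : ℝ :=
  (∑ i, l (y i) (net2 θ.1 θ.2 (X i))) / n

/-- second-to-last and last coordinates of the data -/
def tailPt (m : Fin 3) : Fin 2 → ℝ :=
  ![![1, 1, 2] m, ![-1, -2, 1] m]

/-- The first `h` coordinates: `1` at `r`, `-2` at `j ≠ r` and `-1` elsewhere. -/
def headPt {h : ℕ} (r j : Fin h) : Fin h → ℝ :=
  fun i => if i = r then 1 else if i = j then -2 else -1

/-- The data points. -/
def dataPt {h : ℕ} (d : Fin h × Fin h × Fin 3) : Fin (h + 2) → ℝ :=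
  Fin.append (headPt d.1 d.2.1) (tailPt d.2.2)

lemma dot_dataPt {h : ℕ} (v : Fin (h + 2) → ℝ) (d : Fin h × Fin h × Fin 3) :
    ∑ i, v i * dataPt d i = ∑ i, v (Fin.castAdd 2 i) * headPt d.1 d.2.1 i
      + (v (Fin.natAdd h 0) * tailPt d.2.2 0 + v (Fin.natAdd h 1) * tailPt d.2.2 1) := by
  rw [Fin.sum_univ_add, Fin.sum_univ_two]
  simp only [dataPt, Fin.append_left, Fin.append_right]

lemma rigid {h : ℕ} (r : Fin h) (v : Fin (h + 2) → ℝ)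
    (hv : ∀ j m, ∑ i, v i * dataPt (r, j, m) i = 1) :
    v = Pi.single (Fin.castAdd 2 r) 1 := by
  simp only [dot_dataPt] at hv
  have h0 := hv r 0
  have h1 := hv r 1
  have h2 := hv r 2
  simp [tailPt] at h0 h1 h2
  have hq : v (Fin.natAdd h 1) = 0 := by linarith
  have hp : v (Fin.natAdd h 0) = 0 := by linarith
  have hj : ∀ j, j ≠ r → v (Fin.castAdd 2 j) = 0 := by
    intro j hjr
    have hj0 := hv j 0
    simp [tailPt] at hj0
    have e : ∑ i, v (Fin.castAdd 2 i) * headPt r r i - ∑ i, v (Fin.castAdd 2 i) * headPt r j i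
        = v (Fin.castAdd 2 j) := by
      rw [← Finset.sum_sub_distrib, Finset.sum_eq_single j]
      · simp [headPt, hjr]; ring
      · intro b _ hb
        simp only [headPt, if_neg hb]
        split_ifs <;> ring
      · simp
    linarith
  have hr : v (Fin.castAdd 2 r) = 1 := by
    have e : ∑ i, v (Fin.castAdd 2 i) * headPt r r i = v (Fin.castAdd 2 r) := by
      rw [Finset.sum_eq_single r]
      · simp [headPt]
      · intro b _ hb
        simp [hj b hb]
      · simp
    linarith
  funext i
  refine Fin.addCases (fun j => ?_) (fun j => ?_) i
  · by_cases hjr : j = r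
    · subst hjr; simpa using hr
    · rw [hj j hjr, Pi.single_eq_of_ne]
      intro hc
      exact hjr (Fin.castAdd_injective _ _ hc)
  · rw [Pi.single_eq_of_ne]
    · fin_cases j
      · exact hp
      · exact hq
    · intro hc
      have := congrArg Fin.val hc
      simp at this
      omega

/-- Head coordinates of data points never vanish. -/
lemma headPt_ne {h : ℕ} (r j s : Fin h) : 0 < headPt r j s * headPt r j s := by
  unfold headPt
  split_ifs <;> norm_num

/-- Interpolating networks whose activation pattern is that of `B` are rescalings of `B`. -/
lemma open_imp_closed {h : ℕ} (w : Fin h → ℝ) (A : Matrix (Fin h) (Fin (h + 2)) ℝ)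
    (hS : ∀ d, net2 w A (dataPt d) = 1)
    (hU : ∀ r, 0 < w r ∧ ∀ d : Fin h × Fin h × Fin 3,
      0 < A.mulVec (dataPt d) r * headPt d.1 d.2.1 r) :
    ∀ r, 0 ≤ w r ∧ (fun i => w r * A r i) = Pi.single (Fin.castAdd 2 r) 1 := by
  intro r
  refine ⟨(hU r).1.le, rigid r _ ?_⟩
  intro j m
  have e := hS (r, j, m)
  unfold net2 at e
  rw [Finset.sum_eq_single r] at e
  · have hp := (hU r).2 (r, j, m)
    simp only [headPt, if_true, mul_one] at hp
    rw [max_eq_left hp.le] at e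
    rw [← e, Matrix.mulVec, dotProduct, Finset.mul_sum]
    exact Finset.sum_congr rfl fun i _ => by ring
  · intro s _ hs
    have hp := (hU s).2 (r, j, m)
    simp only [headPt, if_neg hs] at hp
    have : A.mulVec (dataPt (r, j, m)) s ≤ 0 := by
      split_ifs at hp <;> linarith
    rw [max_eq_right this, mul_zero]
  · simp

lemma closed_imp_open {h : ℕ} (w : Fin h → ℝ) (A : Matrix (Fin h) (Fin (h + 2)) ℝ)
    (hC : ∀ r, 0 ≤ w r ∧ (fun i => w r * A r i) = Pi.single (Fin.castAdd 2 r) 1) :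
    ∀ r, 0 < w r ∧ ∀ d : Fin h × Fin h × Fin 3,
      0 < A.mulVec (dataPt d) r * headPt d.1 d.2.1 r := by
  intro r
  obtain ⟨h0, h1⟩ := hC r
  have hw : 0 < w r := by
    refine lt_of_le_of_ne h0 fun hc => ?_
    have := congrFun h1 (Fin.castAdd 2 r)
    simp [← hc] at this
  refine ⟨hw, fun d => ?_⟩
  have e : w r * A.mulVec (dataPt d) r = headPt d.1 d.2.1 r := by
    have : w r * A.mulVec (dataPt d) r = ∑ i, (fun i => w r * A r i) i * dataPt d i := by
      rw [Matrix.mulVec, dotProduct, Finset.mul_sum]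
      exact Finset.sum_congr rfl fun i _ => by ring
    rw [this, h1]
    simp [Pi.single_apply, dataPt, Fin.append_left]
  have h2 := headPt_ne d.1 d.2.1 r
  rw [← e] at h2 ⊢
  have : 0 < w r * (A.mulVec (dataPt d) r * (w r * A.mulVec (dataPt d) r)) := by linarith
  exact pos_of_mul_pos_right this hw.le

/-- The path argument. -/
lemma no_path {h : ℕ} (π : ℝ → (Fin h → ℝ) × Matrix (Fin h) (Fin (h + 2)) ℝ)
    (hπ : Continuous π) (hS : ∀ t ∈ Set.Icc (0 : ℝ) 1, ∀ d, net2 (π t).1 (π t).2 (dataPt d) = 1)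
    (h1 : ∀ r, 0 ≤ (π 1).1 r ∧
      (fun i => (π 1).1 r * (π 1).2 r i) = Pi.single (Fin.castAdd 2 r) 1) :
    ∀ r, 0 ≤ (π 0).1 r := by
  set ρ : ℝ → (Fin h → ℝ) × Matrix (Fin h) (Fin (h + 2)) ℝ :=
    fun t => π (Set.projIcc 0 1 zero_le_one t) with hρ
  have hρc : Continuous ρ := hπ.comp (continuous_subtype_val.comp continuous_projIcc)
  have hρS : ∀ t d, net2 (ρ t).1 (ρ t).2 (dataPt d) = 1 := fun t d => hS _ (Subtype.prop _) d
  have hρ0 : ρ 0 = π 0 := by simp [hρ]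
  have hρ1 : ρ 1 = π 1 := by simp [hρ]
  set U : Set ℝ := {t | ∀ r, 0 ≤ (ρ t).1 r ∧
      (fun i => (ρ t).1 r * (ρ t).2 r i) = Pi.single (Fin.castAdd 2 r) 1} with hU
  have hw : ∀ r, Continuous fun t => (ρ t).1 r := fun r =>
    (continuous_apply r).comp (continuous_fst.comp hρc)
  have hA : Continuous fun t => (ρ t).2 := continuous_snd.comp hρc
  have hAr : ∀ r i, Continuous fun t => (ρ t).2 r i := fun r i => hA.matrix_elem r i
  have hUc : IsClosed U := by
    simp only [hU, Set.ofPred_forall, Set.ofPred_and]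
    refine isClosed_iInter fun r => (isClosed_le continuous_const (hw r)).inter ?_
    exact isClosed_eq (continuous_pi fun i => (hw r).mul (hAr r i)) continuous_const
  have hU2 : U = {t | ∀ r, 0 < (ρ t).1 r ∧ ∀ d : Fin h × Fin h × Fin 3,
      0 < (ρ t).2.mulVec (dataPt d) r * headPt d.1 d.2.1 r} := by
    ext t
    exact ⟨fun ht => closed_imp_open _ _ ht, fun ht => open_imp_closed _ _ (hρS t) ht⟩
  have hUo : IsOpen U := by
    rw [hU2]
    simp only [Set.ofPred_forall, Set.ofPred_and]
    refine isOpen_iInter_of_finite fun r => (isOpen_lt continuous_const (hw r)).inter ?_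
    refine isOpen_iInter_of_finite fun d => isOpen_lt continuous_const ?_
    exact ((continuous_apply r).comp (hA.matrix_mulVec continuous_const)).mul continuous_const
  have huniv : U = Set.univ := IsClopen.eq_univ ⟨hUc, hUo⟩ ⟨1, by
    simp only [hU, Set.mem_ofPred_eq, hρ1]; exact h1⟩
  have h0 : (0 : ℝ) ∈ U := huniv ▸ Set.mem_univ _
  intro r
  rw [← hρ0]
  exact (h0 r).1

/-- Teacher weights, padded by zeros. -/
def wTea (H : ℕ) : Fin H → ℝ := fun r => if r.val = 0 then 1 else if r.val = 1 then -1 else 0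

/-- Teacher first layer, padded by zeros. -/
def aTea (H h : ℕ) : Matrix (Fin H) (Fin (h + 2)) ℝ :=
  fun r => if r.val = 0 then Pi.single (Fin.natAdd h 0) 1 else Pi.single (Fin.natAdd h 1) 1

lemma teacher_eq (k h : ℕ) (d : Fin h × Fin h × Fin 3) :
    net2 (wTea (k + 2)) (aTea (k + 2) h) (dataPt d) = 1 := by
  obtain ⟨r, j, m⟩ := d
  unfold net2
  rw [Fin.sum_univ_succ, Fin.sum_univ_succ, Finset.sum_eq_zero]
  · have e0 : (aTea (k + 2) h).mulVec (dataPt (r, j, m)) 0 = tailPt m 0 := by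
      simp only [Matrix.mulVec, aTea, dataPt]
      rw [if_pos (by simp)]
      simp only [single_dotProduct, Fin.append_right, one_mul]
    have e1 : (aTea (k + 2) h).mulVec (dataPt (r, j, m)) (Fin.succ 0) = tailPt m 1 := by
      simp only [Matrix.mulVec, aTea, dataPt]
      rw [if_neg (by simp)]
      simp only [single_dotProduct, Fin.append_right, one_mul]
    rw [e0, e1]
    fin_cases m <;> simp [wTea, tailPt] <;> norm_num
  · intro i _
    simp [wTea]

/-- The solution `B`. -/
def aB (h : ℕ) : Matrix (Fin h) (Fin (h + 2)) ℝ := fun r => Pi.single (Fin.castAdd 2 r) 1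

lemma b_eq (h : ℕ) (d : Fin h × Fin h × Fin 3) :
    net2 (fun _ => 1) (aB h) (dataPt d) = 1 := by
  obtain ⟨r, j, m⟩ := d
  have e : ∀ s, (aB h).mulVec (dataPt (r, j, m)) s = headPt r j s := by
    intro s
    simp only [Matrix.mulVec, aB, dataPt, single_dotProduct, Fin.append_left, one_mul]
  unfold net2
  rw [Finset.sum_eq_single r]
  · rw [e]; simp [headPt]
  · intro s _ hs
    rw [e]
    simp only [headPt, if_neg hs]
    split_ifs <;> norm_num
  · simp

/-- **Theorem (disconnected global minima in overparametrized two-layer nets).**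
For any student width `h ≥ 2` and any loss `l(y, ŷ)` convex in `ŷ` and minimized exactly at
`ŷ = y`, there is a finite dataset generated by a two-layer ReLU teacher network with two
hidden units and one output unit such that the student network with `h` hidden units has two
global minimizers of the empirical loss that cannot be connected: every continuous path in
parameter space between them passes through a point of strictly larger loss. -/
theorem two_layer_disconnected_minima
    (h : ℕ) (hh : 2 ≤ h) (l : ℝ → ℝ → ℝ)
    (hconv : ∀ y : ℝ, ConvexOn ℝ Set.univ (l y))
    (hmin : ∀ y yhat : ℝ, yhat ≠ y → l y y < l y yhat) :
    ∃ (n : ℕ) (X : Fin n → (Fin (h + 2) → ℝ)) (y : Fin n → ℝ),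
      0 < n ∧
      (∃ (wT : Fin 2 → ℝ) (AT : Matrix (Fin 2) (Fin (h + 2)) ℝ),
        ∀ i, y i = net2 wT AT (X i)) ∧
      ∃ θA θB : (Fin h → ℝ) × Matrix (Fin h) (Fin (h + 2)) ℝ,
        (∀ θ : (Fin h → ℝ) × Matrix (Fin h) (Fin (h + 2)) ℝ,
          loss2 n l X y θA ≤ loss2 n l X y θ) ∧
        (∀ θ : (Fin h → ℝ) × Matrix (Fin h) (Fin (h + 2)) ℝ,
          loss2 n l X y θB ≤ loss2 n l X y θ) ∧
        ∀ π : ℝ → (Fin h → ℝ) × Matrix (Fin h) (Fin (h + 2)) ℝ,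
          Continuous π → π 0 = θA → π 1 = θB →
          ∃ t ∈ Set.Icc (0 : ℝ) 1, loss2 n l X y θA < loss2 n l X y (π t) := by
  obtain ⟨k, rfl⟩ : ∃ k, h = k + 2 := ⟨h - 2, by omega⟩
  let ι := Fin (k + 2) × Fin (k + 2) × Fin 3
  let e : ι ≃ Fin (Fintype.card ι) := Fintype.equivFin ι
  have hn : 0 < Fintype.card ι := Fintype.card_pos
  have hnR : (0 : ℝ) < (Fintype.card ι : ℝ) := by exact_mod_cast hn
  have hle : ∀ a : ℝ, l 1 1 ≤ l 1 a := by
    intro a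
    by_cases ha : a = 1
    · rw [ha]
    · exact (hmin 1 a ha).le
  refine ⟨Fintype.card ι, fun i => dataPt (e.symm i), fun _ => 1, hn,
    ⟨wTea 2, aTea 2 (k + 2), fun i => (teacher_eq 0 _ _).symm⟩,
    (wTea (k + 2), aTea (k + 2) (k + 2)), (fun _ => 1, aB (k + 2)), ?_, ?_, ?_⟩
  · intro θ
    simp only [loss2, teacher_eq]
    gcongr
    exact hle _
  · intro θ
    simp only [loss2, b_eq]
    gcongr
    exact hle _
  · intro π hπ h0 h1
    by_contra! hcon
    have hS : ∀ t ∈ Set.Icc (0 : ℝ) 1, ∀ d, net2 (π t).1 (π t).2 (dataPt d) = 1 := by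
      intro t ht d
      by_contra hd
      refine absurd (hcon t ht) (not_le.mpr ?_)
      simp only [loss2, teacher_eq]
      refine div_lt_div_of_pos_right ?_ hnR
      refine Finset.sum_lt_sum (fun i _ => hle _) ⟨e d, Finset.mem_univ _, ?_⟩
      simp only [Equiv.symm_apply_apply]
      exact hmin 1 _ hd
    have := no_path π hπ hS (by
      intro r
      rw [h1]
      refine ⟨zero_le_one, ?_⟩
      funext i
      simp [aB]) 1
    rw [h0] at this
    simp [wTea] at this
    linarith
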